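/- arXiv:2306.06422 — 2 statements merged into one kernel-verified Lean document; each statement's English description precedes it below -/
import Mathlib

section
/- Let p be an odd prime, m even, q = p^m, and Π : 𝔽_q → 𝔽_q perfect nonlinear with |Π⁻¹(0)| = 1, Π weakly regular, and the map a ↦ Π_a*(0) on 𝔽_q^* not surjective onto 𝔽_p. Then the weight distribution of C̄_Π is: Ā_0 = 1, Ā_{(p−1)(p^{m−1}−p^{m/2−1})} = p^m(p^m−1)/2, Ā_{(p−1)p^{m−1}−p^{m/2−1}} = p^m(p^m−1)(p−1)/2, Ā_{(p−1)p^{m−1}} = p^{m+1}−p, Ā_{(p−1)p^{m−1}+p^{m/2−1}} = p^m(p^m−1)(p−1)/2, Ā_{(p−1)(p^{m−1}+p^{m/2−1})} = p^m(p^m−1)/2, Ā_{p^m} = p−1, and all other Ā_i = 0. -/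
open Finset

/-- The code `C̄_Π = {(Tr(aΠ(x)+bx+c))_{x∈𝔽_q} : a,b,c ∈ 𝔽_q}` as a set of functions. -/
def CbarCode (p : ℕ) [Fact p.Prime] (F : Type*) [Field F] [Fintype F]
    [Algebra (ZMod p) F] (Pl : F → F) : Set (F → ZMod p) :=
  {g | ∃ a b c : F, g = fun x => Algebra.trace (ZMod p) F (a * Pl x + b * x + c)}

/-- Hamming weight of a word of length `q`. -/
def wtBar (p : ℕ) [Fact p.Prime] (F : Type*) [Fintype F] [DecidableEq F]
    (g : F → ZMod p) : ℕ :=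
  (Finset.univ.filter (fun x : F => g x ≠ 0)).card

/-- Number of codewords of `C̄_Π` of Hamming weight `i`. -/
noncomputable def AbarCount (p : ℕ) [Fact p.Prime] (F : Type*) [Field F] [Fintype F]
    [DecidableEq F] [Algebra (ZMod p) F] (Pl : F → F) (i : ℕ) : ℕ :=
  Nat.card {g : F → ZMod p | g ∈ CbarCode p F Pl ∧ wtBar p F g = i}

lemma key_const (p : ℕ) [Fact p.Prime] (ξ : ℂ) (hξ : IsPrimitiveRoot ξ p)
    (c : ZMod p → ℤ) (h : ∑ j : ZMod p, (c j : ℂ) * ξ ^ j.val = 0) (i j : ZMod p) :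
    c i = c j := by
  have hpp : p.Prime := Fact.out
  have h1 : ∑ j : ZMod p, ξ ^ j.val = 0 := by
    have := hξ.geom_sum_eq_zero hpp.one_lt
    rw [← this]
    refine Finset.sum_bij (fun a _ => a.val) ?_ ?_ ?_ ?_
    · intro a _; simpa using ZMod.val_lt a
    · intro a _ b _ hab; exact ZMod.val_injective p hab
    · intro b hb; exact ⟨(b : ZMod p), Finset.mem_univ _, ZMod.val_cast_of_lt (by simpa using hb)⟩
    · intro a _; rfl
  set l : ZMod p := ((p - 1 : ℕ) : ZMod p) with hl
  have hlv : l.val = p - 1 := ZMod.val_cast_of_lt (by have := hpp.pos; omega)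
  suffices H : ∀ i, c i = c l by rw [H i, H j]
  let P : Polynomial ℚ := ∑ j : ZMod p, Polynomial.monomial j.val ((c j - c l : ℤ) : ℚ)
  have hP0 : Polynomial.aeval ξ P = 0 := by
    simp only [P, map_sum, Polynomial.aeval_monomial]
    have : ∑ j : ZMod p, ((c j : ℂ) * ξ ^ j.val - (c l : ℂ) * ξ ^ j.val) = 0 := by
      rw [Finset.sum_sub_distrib, h, ← Finset.mul_sum, h1]; simp
    rw [← this]
    refine Finset.sum_congr rfl fun j _ => ?_
    simp; ring
  have hcoeff : ∀ i : ZMod p, P.coeff i.val = ((c i - c l : ℤ) : ℚ) := by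
    intro i
    simp only [P, Polynomial.finsetSum_coeff, Polynomial.coeff_monomial]
    rw [Finset.sum_eq_single i]
    · simp
    · intro b _ hb; rw [if_neg]; intro h; exact hb (ZMod.val_injective p h)
    · simp
  have hdeg : P.degree < ((p - 1 : ℕ) : WithBot ℕ) := by
    rw [Polynomial.degree_lt_iff_coeff_zero]
    intro n hn
    by_cases hnp : n < p
    · have : n = l.val := by omega
      rw [this, hcoeff]; simp
    · simp only [P, Polynomial.finsetSum_coeff, Polynomial.coeff_monomial]
      refine Finset.sum_eq_zero fun x _ => ?_
      rw [if_neg]; have := ZMod.val_lt x; omega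
  have hPz : P = 0 := by
    by_contra hne
    have := minpoly.degree_le_of_ne_zero ℚ ξ hne hP0
    rw [← Polynomial.cyclotomic_eq_minpoly_rat hξ hpp.pos, Polynomial.degree_cyclotomic,
      Nat.totient_prime hpp] at this
    exact absurd this (not_le.mpr hdeg)
  intro i
  have := hcoeff i
  rw [hPz] at this
  simp at this
  have h2 : (c i : ℚ) = c l := by linarith
  exact_mod_cast h2

lemma fiber_count (p : ℕ) [Fact p.Prime] (ξ : ℂ) (hξ : IsPrimitiveRoot ξ p)
    {F : Type*} [Fintype F] (f : F → ZMod p) (v : ℤ) (d : ZMod p)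
    (h : ∑ x : F, ξ ^ (f x).val = (v : ℂ) * ξ ^ d.val) (j : ZMod p) :
    (p : ℤ) * ((univ.filter (fun x => f x = j)).card : ℤ)
      = Fintype.card F - v + if j = d then p * v else 0 := by
  let N : ZMod p → ℤ := fun j => ((univ.filter (fun x => f x = j)).card : ℤ)
  let c : ZMod p → ℤ := fun j => N j - if j = d then v else 0
  have hN : ∑ j : ZMod p, (N j : ℂ) * ξ ^ j.val = ∑ x : F, ξ ^ (f x).val := by
    rw [← Finset.sum_fiberwise (s := univ) (g := f)]
    refine Finset.sum_congr rfl fun j _ => ?_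
    rw [Finset.sum_congr rfl (g := fun _ => ξ ^ j.val)]
    · simp [N]
    · intro x hx; simp at hx; rw [hx]
  have hc : ∑ j : ZMod p, (c j : ℂ) * ξ ^ j.val = 0 := by
    simp only [c, Int.cast_sub, sub_mul, Finset.sum_sub_distrib, hN, h]
    simp [apply_ite]
  have hs : ∑ j : ZMod p, c j = Fintype.card F - v := by
    have : ∑ j : ZMod p, N j = Fintype.card F := by
      simp only [N]
      rw [← Nat.cast_sum, ← Finset.card_eq_sum_card_fiberwise (s := univ) (t := univ) (f := f)]
      · simp
      · simp
    simp [c, Finset.sum_sub_distrib, this]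
  have hcc : ∀ i, c i = c j := fun i => key_const p ξ hξ c hc i j
  rw [Finset.sum_congr rfl (fun i _ => hcc i)] at hs
  simp [ZMod.card] at hs
  have : N j = c j + if j = d then v else 0 := by simp [c]
  change (p : ℤ) * N j = _
  rw [this, mul_add, hs]; split_ifs <;> simp

lemma trace_sum (p : ℕ) [Fact p.Prime] (ξ : ℂ) (hξ : IsPrimitiveRoot ξ p)
    (F : Type*) [Field F] [Fintype F] [Algebra (ZMod p) F] (y : F) (hy : y ≠ 0) :
    ∑ x : F, ξ ^ (Algebra.trace (ZMod p) F (x * y)).val = 0 := by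
  have hpp : p.Prime := Fact.out
  let χ := AddChar.zmodChar p hξ.pow_eq_one
  let ψ : AddChar F ℂ := χ.compAddMonoidHom
    ((Algebra.trace (ZMod p) F).toAddMonoidHom.comp (AddMonoidHom.mulRight y))
  have hψ : ∀ x, ψ x = ξ ^ (Algebra.trace (ZMod p) F (x * y)).val := by
    intro x
    simp [ψ, χ, AddChar.zmodChar_apply]
  simp only [← hψ]
  apply AddChar.sum_eq_zero_of_ne_one
  intro h1
  obtain ⟨z, hz⟩ := Algebra.trace_surjective (ZMod p) F 1
  have h2 := hψ (z / y)
  rw [h1, div_mul_cancel₀ _ hy, hz, ZMod.val_one] at h2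
  simp at h2
  exact hξ.ne_one hpp.one_lt h2.symm

lemma sum_eps (p : ℕ) [Fact p.Prime] (ξ : ℂ) (hξ : IsPrimitiveRoot ξ p)
    {ι : Type*} (T : Finset ι) (e : ι → ℤ) (d : ι → ZMod p)
    (h : ∑ a ∈ T, (e a : ℂ) * ξ ^ (d a).val = 0) (r : ZMod p) (hr : ∀ a ∈ T, d a ≠ r) :
    ∑ a ∈ T, e a = 0 := by
  classical
  let c : ZMod p → ℤ := fun j => ∑ a ∈ T with d a = j, e a
  have hc : ∑ j : ZMod p, (c j : ℂ) * ξ ^ j.val = 0 := by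
    rw [← h, ← Finset.sum_fiberwise (s := T) (g := d)]
    refine Finset.sum_congr rfl fun j _ => ?_
    simp only [c, Int.cast_sum, Finset.sum_mul]
    refine Finset.sum_congr rfl fun x hx => ?_
    simp at hx; rw [hx.2]
  have hr0 : c r = 0 := by
    simp only [c]
    rw [Finset.filter_eq_empty_iff.mpr (fun {a} ha => hr a ha)]; simp
  rw [← Finset.sum_fiberwise (s := T) (g := d)]
  exact Finset.sum_eq_zero fun j _ => (key_const p ξ hξ c hc j r).trans hr0

lemma sum_one_rest {ι : Type*} [Fintype ι] [DecidableEq ι] (x0 : ι) (g : ι → ℕ) (Y : ℕ)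
    (h : ∀ x, x ≠ x0 → g x = Y) : ∑ x, g x = g x0 + (Fintype.card ι - 1) * Y := by
  rw [← Finset.add_sum_erase univ g (Finset.mem_univ x0),
    Finset.sum_congr rfl (fun x hx => h x (Finset.ne_of_mem_erase hx))]
  simp [Finset.card_erase_of_mem]

/-- word with parameters -/
noncomputable def wordOf (p : ℕ) [Fact p.Prime] (F : Type*) [Field F] [Fintype F]
    [Algebra (ZMod p) F] (Pl : F → F) (v : F × F × ZMod p) : F → ZMod p :=
  fun x => Algebra.trace (ZMod p) F (v.1 * Pl x) + Algebra.trace (ZMod p) F (v.2.1 * x) + v.2.2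

lemma wt_word (p : ℕ) [Fact p.Prime] (F : Type*) [Field F] [Fintype F] [DecidableEq F]
    [Algebra (ZMod p) F] (Pl : F → F) (a b : F) (t : ZMod p) :
    (wtBar p F (wordOf p F Pl (a, b, t)) : ℤ) = Fintype.card F -
      ((univ.filter (fun x : F => Algebra.trace (ZMod p) F (a * Pl x)
        + Algebra.trace (ZMod p) F (b * x) = -t)).card : ℤ) := by
  have := Finset.card_filter_add_card_filter_not (s := (univ : Finset F))
    (fun x : F => Algebra.trace (ZMod p) F (a * Pl x)
        + Algebra.trace (ZMod p) F (b * x) = -t)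
  unfold wtBar wordOf
  simp only [ne_eq, eq_neg_iff_add_eq_zero] at this ⊢
  rw [Finset.card_univ] at this
  omega

lemma code_eq_range (p : ℕ) [Fact p.Prime] (F : Type*) [Field F] [Fintype F]
    [Algebra (ZMod p) F] (Pl : F → F) :
    CbarCode p F Pl = Set.range (wordOf p F Pl) := by
  ext g
  constructor
  · rintro ⟨a, b, c, rfl⟩
    exact ⟨(a, b, Algebra.trace (ZMod p) F c), by funext x; simp [wordOf]⟩
  · rintro ⟨⟨a, b, t⟩, rfl⟩
    obtain ⟨c, hc⟩ := Algebra.trace_surjective (ZMod p) F t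
    exact ⟨a, b, c, by funext x; simp [wordOf, hc]⟩

lemma word_inj (p : ℕ) [Fact p.Prime] (F : Type*) [Field F] [Fintype F] [DecidableEq F]
    [Algebra (ZMod p) F] (Pl : F → F)
    (h : ∀ v, wtBar p F (wordOf p F Pl v) = 0 → v = 0) :
    Function.Injective (wordOf p F Pl) := by
  intro v w hvw
  rw [← sub_eq_zero]
  apply h
  have : wordOf p F Pl (v - w) = 0 := by
    funext x
    have := congrFun hvw x
    simp only [wordOf, Prod.fst_sub, Prod.snd_sub, sub_mul, map_sub, Pi.zero_apply] at this ⊢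
    linear_combination this
  rw [this]; simp [wtBar]

lemma count_eq (p : ℕ) [Fact p.Prime] (F : Type*) [Field F] [Fintype F] [DecidableEq F]
    [Algebra (ZMod p) F] (Pl : F → F)
    (h : ∀ v, wtBar p F (wordOf p F Pl v) = 0 → v = 0) (i : ℕ) :
    AbarCount p F Pl i = ∑ a : F, ∑ b : F, ∑ t : ZMod p,
      if wtBar p F (wordOf p F Pl (a, b, t)) = i then 1 else 0 := by
  have hinj := word_inj p F Pl h
  have h1 : {g : F → ZMod p | g ∈ CbarCode p F Pl ∧ wtBar p F g = i} =
      wordOf p F Pl '' ((univ.filter fun v => wtBar p F (wordOf p F Pl v) = i : Finset _) : Set (F × F × ZMod p)) := by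
    ext g
    rw [code_eq_range]
    simp only [Set.mem_ofPred_eq, Set.mem_range, Set.mem_image, Finset.coe_filter, Finset.mem_univ, true_and]
    constructor
    · rintro ⟨⟨v, rfl⟩, hv⟩; exact ⟨v, hv, rfl⟩
    · rintro ⟨v, hv, rfl⟩; exact ⟨⟨v, rfl⟩, hv⟩
  unfold AbarCount
  rw [h1, Nat.card_image_of_injective hinj, Nat.card_coe_set_eq, Set.ncard_coe_finset,
    Finset.card_filter, Fintype.sum_prod_type]
  simp only [Fintype.sum_prod_type]

lemma main_count (p q s n w0 w1 w2 w4 w5 : ℕ) [Fact p.Prime] (hp3 : 3 ≤ p) (hs : 1 ≤ s)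
    (hq : q = p ^ 2 * s ^ 2) (hw0 : (w0 : ℤ) = (p - 1) * (p * s ^ 2))
    (hw1 : (w1 : ℤ) = (p - 1) * (p * s ^ 2 - s))
    (hw2 : (w2 : ℤ) = (p - 1) * (p * s ^ 2) - s)
    (hw4 : (w4 : ℤ) = (p - 1) * (p * s ^ 2) + s)
    (hw5 : (w5 : ℤ) = (p - 1) * (p * s ^ 2 + s))
    (hn : 2 * n = q - 1)
    (F : Type*) [Field F] [Fintype F] [DecidableEq F] [Algebra (ZMod p) F]
    (hF : Fintype.card F = q)
    (ξ : ℂ) (hξ : IsPrimitiveRoot ξ p)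
    (Pl : F → F)
    (ε : F → ℤ) (D : F → F → ZMod p)
    (hε : ∀ a : F, a ≠ 0 → (ε a = 1 ∨ ε a = -1))
    (hwr : ∀ a : F, a ≠ 0 → ∀ y : F, ∑ x : F,
          ξ ^ (Algebra.trace (ZMod p) F (a * Pl x) + Algebra.trace (ZMod p) F (y * x)).val
        = ((ε a * (p * s) : ℤ) : ℂ) * ξ ^ (D a y).val)
    (hsum : ∑ a ∈ univ.erase (0 : F), ε a = 0) (i : ℕ) :
    AbarCount p F Pl i = (if 0 = i then 1 else 0) + (p - 1) * (if q = i then 1 else 0)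
      + (q - 1) * (p * if w0 = i then 1 else 0) +
      (n * (q * ((if w1 = i then 1 else 0) + (p - 1) * (if w4 = i then 1 else 0))) +
       n * (q * ((if w5 = i then 1 else 0) + (p - 1) * (if w2 = i then 1 else 0)))) := by
  have hp0 : (p : ℤ) ≠ 0 := by have : 0 < p := by omega
                               positivity
  have hqz : (q : ℤ) = p ^ 2 * s ^ 2 := by exact_mod_cast hq
  -- weights
  have W1 : ∀ a b t, a ≠ 0 → ε a = 1 →
      wtBar p F (wordOf p F Pl (a, b, t)) = if t = - D a b then w1 else w4 := by
    intro a b t ha he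
    have h1 := fiber_count p ξ hξ _ _ _ (hwr a ha b) (-t)
    have h2 := wt_word p F Pl a b t
    rw [hF, hqz] at h1 h2
    zify
    apply mul_left_cancel₀ hp0
    rw [h2, mul_sub, h1, he]
    simp only [neg_eq_iff_eq_neg]
    split_ifs
    · rw [hw1]; ring
    · rw [hw4]; ring
  have W2 : ∀ a b t, a ≠ 0 → ε a = -1 →
      wtBar p F (wordOf p F Pl (a, b, t)) = if t = - D a b then w5 else w2 := by
    intro a b t ha he
    have h1 := fiber_count p ξ hξ _ _ _ (hwr a ha b) (-t)
    have h2 := wt_word p F Pl a b t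
    rw [hF, hqz] at h1 h2
    zify
    apply mul_left_cancel₀ hp0
    rw [h2, mul_sub, h1, he]
    simp only [neg_eq_iff_eq_neg]
    split_ifs
    · rw [hw5]; ring
    · rw [hw2]; ring
  have W3 : ∀ b t, b ≠ 0 → wtBar p F (wordOf p F Pl (0, b, t)) = w0 := by
    intro b t hb
    have h0 := trace_sum p ξ hξ F b hb
    have h1 := fiber_count p ξ hξ (fun x : F => Algebra.trace (ZMod p) F (0 * Pl x)
        + Algebra.trace (ZMod p) F (b * x)) 0 0 (by simpa [mul_comm] using h0) (-t)
    have h2 := wt_word p F Pl 0 b t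
    rw [hF, hqz] at h1 h2
    zify
    apply mul_left_cancel₀ hp0
    rw [h2, mul_sub, h1, hw0]
    simp; ring
  have W4 : ∀ t, wtBar p F (wordOf p F Pl (0, 0, t)) = if t = 0 then 0 else q := by
    intro t
    split_ifs with h <;> simp [wordOf, wtBar, h, hF]
  have hps : (1 : ℤ) ≤ s := by exact_mod_cast hs
  have hpz : (3 : ℤ) ≤ p := by exact_mod_cast hp3
  have hqpos : 0 < q := by rw [hq]; positivity
  have hss : (3 * s : ℤ) ≤ p * s ^ 2 := by nlinarith
  have nz : ∀ v, wtBar p F (wordOf p F Pl v) = 0 → v = 0 := by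
    rintro ⟨a, b, t⟩ h
    have n0 : w0 ≠ 0 := by zify; rw [hw0]; nlinarith
    have n1 : w1 ≠ 0 := by zify; rw [hw1]; nlinarith
    have n2 : w2 ≠ 0 := by zify; rw [hw2]; nlinarith
    have n4 : w4 ≠ 0 := by zify; rw [hw4]; nlinarith
    have n5 : w5 ≠ 0 := by zify; rw [hw5]; nlinarith
    by_cases ha : a = 0
    · subst ha
      by_cases hb : b = 0
      · subst hb
        rw [W4] at h
        split_ifs at h with ht
        · simp [ht]
        · omega
      · rw [W3 b t hb] at h; omega
    · exfalso
      rcases hε a ha with he | he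
      · rw [W1 a b t ha he] at h; split_ifs at h <;> omega
      · rw [W2 a b t ha he] at h; split_ifs at h <;> omega
  have T : ∀ (t0 : ZMod p) (A B : ℕ), (∑ t : ZMod p, if (if t = t0 then A else B) = i then 1 else 0)
      = (if A = i then 1 else 0) + (p - 1) * (if B = i then 1 else 0) := by
    intro t0 A B
    rw [sum_one_rest t0 _ (if B = i then 1 else 0), ZMod.card]
    · simp
    · intro x hx; simp [hx]
  rw [count_eq p F Pl nz, ← Finset.add_sum_erase univ _ (Finset.mem_univ (0 : F))]
  congr 1
  · rw [sum_one_rest (0 : F) _ (p * if w0 = i then 1 else 0), hF]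
    · simp only [W4, T]
    · intro b hb
      simp only [W3 b _ hb]; simp
  · have hpm : ((univ.erase (0 : F)).filter (fun a => ε a = 1)).card = n ∧
        ((univ.erase (0 : F)).filter (fun a => ¬ ε a = 1)).card = n := by
      have c1 := Finset.card_filter_add_card_filter_not (s := univ.erase (0 : F)) (fun a => ε a = 1)
      rw [Finset.card_erase_of_mem (Finset.mem_univ _), Finset.card_univ, hF] at c1
      rw [Finset.sum_congr rfl (g := fun a => if ε a = 1 then (1 : ℤ) else -1), Finset.sum_ite] at hsum
      · simp at hsum
        omega
      · intro a ha
        rcases hε a (Finset.ne_of_mem_erase ha) with he | he <;> simp [he]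
    rw [Finset.sum_congr rfl (g := fun a => if ε a = 1 then
        q * ((if w1 = i then 1 else 0) + (p - 1) * (if w4 = i then 1 else 0)) else
        q * ((if w5 = i then 1 else 0) + (p - 1) * (if w2 = i then 1 else 0))), Finset.sum_ite,
        Finset.sum_const, Finset.sum_const, hpm.1, hpm.2, smul_eq_mul, smul_eq_mul]
    intro a ha
    have ha0 := Finset.ne_of_mem_erase ha
    rcases hε a ha0 with he | he
    · simp only [W1 a _ _ ha0 he, T, he]; simp [hF]
    · simp only [W2 a _ _ ha0 he, T, he]; simp [hF]

lemma orders (p q s w0 w1 w2 w4 w5 : ℕ) (hp3 : 3 ≤ p) (hs : 1 ≤ s)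
    (hqz : (q : ℤ) = p ^ 2 * s ^ 2) (hw0 : (w0 : ℤ) = (p - 1) * (p * s ^ 2))
    (hw1 : (w1 : ℤ) = (p - 1) * (p * s ^ 2 - s))
    (hw2 : (w2 : ℤ) = (p - 1) * (p * s ^ 2) - s)
    (hw4 : (w4 : ℤ) = (p - 1) * (p * s ^ 2) + s)
    (hw5 : (w5 : ℤ) = (p - 1) * (p * s ^ 2 + s)) :
    0 < w1 ∧ w1 < w2 ∧ w2 < w0 ∧ w0 < w4 ∧ w4 < w5 ∧ w5 < q := by
  have hps : (1 : ℤ) ≤ s := by exact_mod_cast hs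
  have hpz : (3 : ℤ) ≤ p := by exact_mod_cast hp3
  have h1 : (0 : ℤ) < (p - 2) * s := mul_pos (by linarith) (by linarith)
  have h2 : (0 : ℤ) ≤ p * (s * (s - 1)) :=
    mul_nonneg (by linarith) (mul_nonneg (by linarith) (by linarith))
  have h3 : (0 : ℤ) < (p - 1) * (p * s ^ 2 - s) := mul_pos (by linarith) (by linarith)
  zify
  rw [hqz, hw0, hw1, hw2, hw4, hw5]
  refine ⟨h3, ?_, ?_, ?_, ?_, ?_⟩ <;> linarith

/-- the weight distribution of `C̄_Π` for `m` even, assuming `|Π⁻¹(0)| = 1`,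
`Π` weakly regular perfect nonlinear (with signs `ε_a` and duals `Π_a*`) and the map
`a ↦ Π_a*(0)` on `𝔽_q^*` not surjective onto `𝔽_p`. -/
theorem stmt_12 (p m : ℕ) [Fact p.Prime] (hp : Odd p) (hm : Even m) (hm0 : 0 < m)
    (F : Type*) [Field F] [Fintype F] [DecidableEq F] [Algebra (ZMod p) F]
    (hF : Fintype.card F = p ^ m)
    (ξ : ℂ) (hξ : IsPrimitiveRoot ξ p)
    (Pl : F → F)
    (hPN : ∀ a : F, a ≠ 0 → Function.Bijective (fun x : F => Pl (x + a) - Pl x))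
    (hzero : (univ.filter (fun x : F => Pl x = 0)).card = 1)
    (ε : F → ℤ) (D : F → F → ZMod p)
    (hwr : ∀ a : F, a ≠ 0 → (ε a = 1 ∨ ε a = -1) ∧
      ∀ y : F, ∑ x : F,
          ξ ^ (Algebra.trace (ZMod p) F (a * Pl x) + Algebra.trace (ZMod p) F (y * x)).val
        = (ε a : ℂ) * ξ ^ (D a y).val * Real.sqrt (p ^ m))
    (hnsurj : ∃ r : ZMod p, ∀ a : F, a ≠ 0 → D a 0 ≠ r) :
    AbarCount p F Pl 0 = 1 ∧
    AbarCount p F Pl ((p - 1) * (p ^ (m - 1) - p ^ (m / 2 - 1)))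
      = p ^ m * (p ^ m - 1) / 2 ∧
    AbarCount p F Pl ((p - 1) * p ^ (m - 1) - p ^ (m / 2 - 1))
      = p ^ m * (p ^ m - 1) * (p - 1) / 2 ∧
    AbarCount p F Pl ((p - 1) * p ^ (m - 1)) = p ^ (m + 1) - p ∧
    AbarCount p F Pl ((p - 1) * p ^ (m - 1) + p ^ (m / 2 - 1))
      = p ^ m * (p ^ m - 1) * (p - 1) / 2 ∧
    AbarCount p F Pl ((p - 1) * (p ^ (m - 1) + p ^ (m / 2 - 1)))
      = p ^ m * (p ^ m - 1) / 2 ∧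
    AbarCount p F Pl (p ^ m) = p - 1 ∧
    (∀ i : ℕ, i ∉ ({0, (p - 1) * (p ^ (m - 1) - p ^ (m / 2 - 1)),
        (p - 1) * p ^ (m - 1) - p ^ (m / 2 - 1), (p - 1) * p ^ (m - 1),
        (p - 1) * p ^ (m - 1) + p ^ (m / 2 - 1),
        (p - 1) * (p ^ (m - 1) + p ^ (m / 2 - 1)), p ^ m} : Set ℕ) →
      AbarCount p F Pl i = 0) := by
  have hpp : p.Prime := Fact.out
  have hp3 : 3 ≤ p := by
    have := hpp.two_le
    rcases hp with ⟨k, hk⟩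
    omega
  obtain ⟨k, hk⟩ : ∃ k, m = 2 * (k + 1) := by
    obtain ⟨k, hk⟩ := hm
    exact ⟨k - 1, by omega⟩
  obtain ⟨s, hsdef⟩ : ∃ s, s = p ^ k := ⟨_, rfl⟩
  have hs : 1 ≤ s := by rw [hsdef]; exact Nat.one_le_pow _ _ hpp.pos
  have e1 : p ^ (m / 2 - 1) = s := by rw [hsdef]; congr 1; omega
  have e2 : p ^ (m - 1) = p * s ^ 2 := by
    rw [hsdef, show m - 1 = 2 * k + 1 by omega]; ring
  have e3 : p ^ m = p ^ 2 * s ^ 2 := by rw [hsdef, hk]; ring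
  have e4 : p ^ (m + 1) = p ^ m * p := pow_succ _ _
  have e5 : Real.sqrt ((p : ℝ) ^ m) = p * s := by
    rw [show (p : ℝ) ^ m = (p * s) ^ 2 by rw [mul_pow]; exact_mod_cast e3]
    exact Real.sqrt_sq (by positivity)
  rw [e4, e1, e2]
  obtain ⟨q, hq⟩ : ∃ q, q = p ^ m := ⟨_, rfl⟩
  rw [← hq] at hF e3 e4 ⊢
  have hwr' : ∀ a : F, a ≠ 0 → ∀ y : F, ∑ x : F,
          ξ ^ (Algebra.trace (ZMod p) F (a * Pl x) + Algebra.trace (ZMod p) F (y * x)).val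
        = ((ε a * (p * s) : ℤ) : ℂ) * ξ ^ (D a y).val := by
    intro a ha y
    rw [(hwr a ha).2 y, e5]; push_cast; ring
  have hsum : ∑ a ∈ univ.erase (0 : F), ε a = 0 := by
    obtain ⟨r, hr⟩ := hnsurj
    refine sum_eps p ξ hξ _ ε (fun a => D a 0) ?_ r (fun a ha => hr a (Finset.ne_of_mem_erase ha))
    have t1 : ∑ a : F, ∑ x : F, ξ ^ (Algebra.trace (ZMod p) F (a * Pl x)).val = (q : ℂ) := by
      rw [Finset.sum_comm]
      have : ∀ x : F, ∑ a : F, ξ ^ (Algebra.trace (ZMod p) F (a * Pl x)).val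
          = if Pl x = 0 then (q : ℂ) else 0 := by
        intro x
        split_ifs with h
        · simp [h, hF]
        · exact trace_sum p ξ hξ F _ h
      rw [Finset.sum_congr rfl fun x _ => this x, ← Finset.sum_filter, Finset.sum_const, hzero]
      simp
    rw [← Finset.add_sum_erase univ _ (Finset.mem_univ (0 : F))] at t1
    have t2 : ∑ a ∈ univ.erase (0 : F), ∑ x : F, ξ ^ (Algebra.trace (ZMod p) F (a * Pl x)).val
        = ((p : ℂ) * s) * ∑ a ∈ univ.erase (0 : F), (ε a : ℂ) * ξ ^ (D a 0).val := by
      rw [Finset.mul_sum]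
      refine Finset.sum_congr rfl fun a ha => ?_
      have := hwr' a (Finset.ne_of_mem_erase ha) 0
      simp only [zero_mul, map_zero, add_zero] at this
      rw [this]; push_cast; ring
    rw [t2] at t1
    have t3 : ∑ x : F, ξ ^ (Algebra.trace (ZMod p) F (0 * Pl x)).val = (q : ℂ) := by simp [hF]
    rw [t3, add_eq_left] at t1
    have hp0 : (p : ℂ) ≠ 0 := by exact_mod_cast hpp.ne_zero
    have hs0 : (s : ℂ) ≠ 0 := by exact_mod_cast (show s ≠ 0 by omega)
    exact (mul_eq_zero.mp t1).resolve_left (mul_ne_zero hp0 hs0)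
  obtain ⟨n, hn⟩ : ∃ n, 2 * n = q - 1 := by
    have : Odd q := by rw [hq]; exact hp.pow
    obtain ⟨n, hn⟩ := this
    exact ⟨n, by omega⟩
  have hps : (1 : ℤ) ≤ s := by exact_mod_cast hs
  have hpz : (3 : ℤ) ≤ p := by exact_mod_cast hp3
  have hss : (3 * s : ℤ) ≤ p * s ^ 2 := by nlinarith
  have hssN : 3 * s ≤ p * s ^ 2 := by exact_mod_cast hss
  have hp1 : ((p - 1 : ℕ) : ℤ) = p - 1 := by rw [Nat.cast_sub (by omega)]; simp
  obtain ⟨w0, d0⟩ : ∃ w, w = (p - 1) * (p * s ^ 2) := ⟨_, rfl⟩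
  obtain ⟨w1, d1⟩ : ∃ w, w = (p - 1) * (p * s ^ 2 - s) := ⟨_, rfl⟩
  obtain ⟨w2, d2⟩ : ∃ w, w = (p - 1) * (p * s ^ 2) - s := ⟨_, rfl⟩
  obtain ⟨w4, d4⟩ : ∃ w, w = (p - 1) * (p * s ^ 2) + s := ⟨_, rfl⟩
  obtain ⟨w5, d5⟩ : ∃ w, w = (p - 1) * (p * s ^ 2 + s) := ⟨_, rfl⟩
  have hw0 : (w0 : ℤ) = (p - 1) * (p * s ^ 2) := by rw [d0]; push_cast [hp1]; ring
  have hw1 : (w1 : ℤ) = (p - 1) * (p * s ^ 2 - s) := by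
    rw [d1, Nat.cast_mul, hp1, Nat.cast_sub (by omega)]; push_cast; ring
  have hw2 : (w2 : ℤ) = (p - 1) * (p * s ^ 2) - s := by
    rw [d2, Nat.cast_sub]
    · push_cast [hp1]; ring
    · calc s ≤ 1 * (p * s ^ 2) := by omega
        _ ≤ _ := Nat.mul_le_mul_right _ (by omega)
  have hw4 : (w4 : ℤ) = (p - 1) * (p * s ^ 2) + s := by rw [d4]; push_cast [hp1]; ring
  have hw5 : (w5 : ℤ) = (p - 1) * (p * s ^ 2 + s) := by rw [d5]; push_cast [hp1]; ring
  have key := main_count p q s n w0 w1 w2 w4 w5 hp3 hs e3 hw0 hw1 hw2 hw4 hw5 hn F hF ξ hξ Pl ε D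
    (fun a ha => (hwr a ha).1) hwr' hsum
  rw [← d1, ← d2, ← d4, ← d5, ← d0]
  have hqz : (q : ℤ) = p ^ 2 * s ^ 2 := by exact_mod_cast e3
  obtain ⟨o1, o2, o3, o4, o5, o6⟩ := orders p q s w0 w1 w2 w4 w5 hp3 hs hqz hw0 hw1 hw2 hw4 hw5
  have q1 : q * (q - 1) / 2 = n * q := by
    rw [← hn]; apply Nat.div_eq_of_eq_mul_left (by norm_num); ring
  have q2 : q * (q - 1) * (p - 1) / 2 = n * (q * (p - 1)) := by
    rw [← hn]; apply Nat.div_eq_of_eq_mul_left (by norm_num); ring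
  have q3 : q * p - p = (q - 1) * p := by rw [Nat.sub_mul, one_mul]
  rw [q1, q2, q3]
  refine ⟨?_, ?_, ?_, ?_, ?_, ?_, ?_, ?_⟩
  · rw [key, if_pos rfl, if_neg (by omega), if_neg (by omega), if_neg (by omega), if_neg (by omega), if_neg (by omega), if_neg (by omega)]; simp
  · rw [key, if_neg (by omega), if_neg (by omega), if_neg (by omega), if_pos rfl, if_neg (by omega), if_neg (by omega), if_neg (by omega)]; simp
  · rw [key, if_neg (by omega), if_neg (by omega), if_neg (by omega), if_neg (by omega), if_neg (by omega), if_neg (by omega), if_pos rfl]; simp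
  · rw [key, if_neg (by omega), if_neg (by omega), if_pos rfl, if_neg (by omega), if_neg (by omega), if_neg (by omega), if_neg (by omega)]; simp
  · rw [key, if_neg (by omega), if_neg (by omega), if_neg (by omega), if_neg (by omega), if_pos rfl, if_neg (by omega), if_neg (by omega)]; simp
  · rw [key, if_neg (by omega), if_neg (by omega), if_neg (by omega), if_neg (by omega), if_neg (by omega), if_pos rfl, if_neg (by omega)]; simp
  · rw [key, if_neg (by omega), if_pos rfl, if_neg (by omega), if_neg (by omega), if_neg (by omega), if_neg (by omega), if_neg (by omega)]; simp
  · intro i hi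
    simp only [Set.mem_insert_iff, Set.mem_singleton_iff, not_or] at hi
    obtain ⟨i1, i2, i3, i4, i5, i6, i7⟩ := hi
    rw [key, if_neg (by omega), if_neg (by omega), if_neg (by omega), if_neg (by omega), if_neg (by omega), if_neg (by omega), if_neg (by omega)]; simp
end

section
/- Let p be an odd prime, m odd, q = p^m, and Π : 𝔽_q → 𝔽_q perfect nonlinear with Π(0) = 0 and Π(cx) ≠ cΠ(x) for all x ∈ 𝔽_q^* and c ∈ 𝔽_p \ {0,1}. Then the weight distribution of the code C_Π = {(Tr(aΠ(x)+bx))_{x∈𝔽_q^*} : a,b ∈ 𝔽_q} is: A_0 = 1, A_{(p−1)p^{m−1}−p^{(m−1)/2}} = (p−1)(p^m−1)(p^{m−1}+p^{(m−1)/2})/2, A_{(p−1)p^{m−1}} = (p^{m−1}+1)(p^m−1), A_{(p−1)p^{m−1}+p^{(m−1)/2}} = (p−1)(p^m−1)(p^{m−1}−p^{(m−1)/2})/2, and A_i = 0 otherwise. -/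
open Finset

/-- The code `C_Π = {(Tr(aΠ(x)+bx))_{x∈𝔽_q^*} : a,b ∈ 𝔽_q}` as a set of words indexed by
the nonzero elements of `𝔽_q`. -/
def CCode (p : ℕ) [Fact p.Prime] (F : Type*) [Field F] [Fintype F]
    [Algebra (ZMod p) F] (Pl : F → F) : Set ({x : F // x ≠ 0} → ZMod p) :=
  {g | ∃ a b : F, g = fun x => Algebra.trace (ZMod p) F (a * Pl x.1 + b * x.1)}

/-- Hamming weight of a word of length `q - 1`. -/
def wtC (p : ℕ) [Fact p.Prime] (F : Type*) [Field F] [Fintype F] [DecidableEq F]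
    (g : {x : F // x ≠ 0} → ZMod p) : ℕ :=
  (Finset.univ.filter (fun x : {x : F // x ≠ 0} => g x ≠ 0)).card

/-- Number of codewords of `C_Π` of Hamming weight `i`. -/
noncomputable def ACount (p : ℕ) [Fact p.Prime] (F : Type*) [Field F] [Fintype F]
    [DecidableEq F] [Algebra (ZMod p) F] (Pl : F → F) (i : ℕ) : ℕ :=
  Nat.card {g : {x : F // x ≠ 0} → ZMod p | g ∈ CCode p F Pl ∧ wtC p F g = i}

instance cycInst (p : ℕ) [Fact p.Prime] : IsCyclotomicExtension {p} ℚ (CyclotomicField p ℚ) := by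
  have : NeZero ((p : ℕ) : ℚ) := ⟨by exact_mod_cast (Fact.out : p.Prime).ne_zero⟩
  exact CyclotomicField.isCyclotomicExtension p ℚ

open NumberField in
/-- primitive root in the ring of integers -/
noncomputable def ztR (p : ℕ) [Fact p.Prime] : 𝓞 (CyclotomicField p ℚ) :=
  (IsCyclotomicExtension.zeta_spec p ℚ (CyclotomicField p ℚ)).toInteger

lemma ztR_prim (p : ℕ) [Fact p.Prime] : IsPrimitiveRoot (ztR p) p :=
  (IsCyclotomicExtension.zeta_spec p ℚ (CyclotomicField p ℚ)).toInteger_isPrimitiveRoot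

open NumberField in
/-- additive character -/
noncomputable def psiR (p : ℕ) [Fact p.Prime] : AddChar (ZMod p) (𝓞 (CyclotomicField p ℚ)) :=
  AddChar.zmodChar p (ztR_prim p).pow_eq_one

lemma psiR_prim (p : ℕ) [Fact p.Prime] : (psiR p).IsPrimitive :=
  AddChar.zmodChar_primitive_of_primitive_root p (ztR_prim p)

lemma psiR_natCast (p : ℕ) [Fact p.Prime] (k : ℕ) : psiR p (k : ZMod p) = ztR p ^ k :=
  AddChar.zmodChar_apply' (ztR_prim p).pow_eq_one k

open Polynomial in
lemma psiR_rel (p : ℕ) [Fact p.Prime] (a : ZMod p → ℤ)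
    (h : ∑ c, (a c : NumberField.RingOfIntegers (CyclotomicField p ℚ)) * psiR p c = 0) (c : ZMod p) :
    a c = a 0 := by
  have hpp : p.Prime := Fact.out
  set P : ℤ[X] := ∑ c : ZMod p, C (a c) * X ^ c.val with hP
  have hev : aeval (ztR p) P = 0 := by
    rw [hP, map_sum, ← h]
    refine Finset.sum_congr rfl fun c _ => ?_
    simp only [map_mul, aeval_C, map_pow, aeval_X]
    rw [← psiR_natCast, ZMod.natCast_zmod_val]
    rfl
  have hev2 : aeval (ztR p : CyclotomicField p ℚ) P = 0 := by
    have := congrArg (algebraMap (NumberField.RingOfIntegers (CyclotomicField p ℚ)) (CyclotomicField p ℚ)) hev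
    rw [map_zero, ← aeval_algebraMap_apply] at this
    exact this
  have hdvd : cyclotomic p ℤ ∣ P := by
    have hz := IsCyclotomicExtension.zeta_spec p ℚ (CyclotomicField p ℚ)
    rw [cyclotomic_eq_minpoly hz hpp.pos]
    exact minpoly.isIntegrallyClosed_dvd (hz.isIntegral hpp.pos) hev2
  have hcoef : ∀ c : ZMod p, P.coeff c.val = a c := by
    intro c
    rw [hP, finsetSum_coeff]
    simp only [coeff_C_mul, coeff_X_pow]
    rw [Finset.sum_eq_single c]
    · simp
    · intro b _ hb
      rw [if_neg, mul_zero]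
      intro h; exact hb (ZMod.val_injective p h).symm
    · simp
  obtain ⟨Q, hQ⟩ := hdvd
  have hdeg : P.natDegree ≤ p - 1 := by
    rw [hP]
    refine natDegree_sum_le_of_forall_le _ _ fun c _ => ?_
    refine (natDegree_C_mul_X_pow_le _ _).trans ?_
    have := ZMod.val_lt c
    omega
  have hQ0 : Q.natDegree = 0 := by
    by_cases h0 : Q = 0
    · simp [h0]
    rw [hQ, (cyclotomic.monic p ℤ).natDegree_mul' h0, natDegree_cyclotomic, Nat.totient_prime hpp] at hdeg
    omega
  obtain ⟨k, rfl⟩ := natDegree_eq_zero.1 hQ0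
  have hc1 : ∀ c : ZMod p, P.coeff c.val = k := by
    intro c
    rw [hQ, coeff_mul_C, cyclotomic_prime, finsetSum_coeff]
    simp only [coeff_X_pow]
    rw [Finset.sum_ite_eq, if_pos (Finset.mem_range.2 (ZMod.val_lt c)), one_mul]
  rw [← hcoef, ← hcoef, hc1, hc1]

open NumberField in
lemma exists_conj (p : ℕ) [Fact p.Prime] :
    ∃ σ : 𝓞 (CyclotomicField p ℚ) ≃+* 𝓞 (CyclotomicField p ℚ), ∀ c, σ (psiR p c) = psiR p (-c) := by
  have hpp : p.Prime := Fact.out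
  have hz := IsCyclotomicExtension.zeta_spec p ℚ (CyclotomicField p ℚ)
  let s := IsCyclotomicExtension.fromZetaAut hz.inv (Polynomial.cyclotomic.irreducible_rat hpp.pos)
  have hs : s (IsCyclotomicExtension.zeta p ℚ (CyclotomicField p ℚ)) = _ :=
    IsCyclotomicExtension.fromZetaAut_spec hz.inv (Polynomial.cyclotomic.irreducible_rat hpp.pos)
  refine ⟨RingOfIntegers.mapRingEquiv s.toRingEquiv, fun c => ?_⟩
  have h1 : RingOfIntegers.mapRingEquiv s.toRingEquiv (ztR p) * ztR p = 1 := by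
    apply RingOfIntegers.ext
    change s (IsCyclotomicExtension.zeta p ℚ (CyclotomicField p ℚ)) * IsCyclotomicExtension.zeta p ℚ (CyclotomicField p ℚ) = 1
    rw [hs]
    exact inv_mul_cancel₀ (hz.ne_zero hpp.ne_zero)
  have h2 : RingOfIntegers.mapRingEquiv s.toRingEquiv (psiR p c) * psiR p c = 1 := by
    rw [← ZMod.natCast_zmod_val c, psiR_natCast, map_pow, ← mul_pow, h1, one_pow]
  have h3 : psiR p (-c) * psiR p c = 1 := by
    rw [← AddChar.map_add_eq_mul]; simp
  have h4 : psiR p c ≠ 0 := right_ne_zero_of_mul_eq_one h3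
  exact mul_right_cancel₀ h4 (h2.trans h3.symm)

open NumberField in
lemma assoc_conj (p m : ℕ) [Fact p.Prime] (σ : 𝓞 (CyclotomicField p ℚ) ≃+* 𝓞 (CyclotomicField p ℚ))
    (hσ : ∀ c, σ (psiR p c) = psiR p (-c)) (W : 𝓞 (CyclotomicField p ℚ))
    (h : W * σ W = (p : 𝓞 (CyclotomicField p ℚ)) ^ m) : Associated W (σ W) := by
  have hz := IsCyclotomicExtension.zeta_spec p ℚ (CyclotomicField p ℚ)
  have hpr : Prime (ztR p - 1) := hz.zeta_sub_one_prime'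
  have hass : Associated ((ztR p - 1) ^ (p - 1)) (p : 𝓞 (CyclotomicField p ℚ)) :=
    IsCyclotomicExtension.Rat.associated_zeta_sub_one_pow_prime p hz
  have hd : W ∣ (ztR p - 1) ^ ((p - 1) * m) := by
    rw [pow_mul, (hass.pow_pow (n := m)).dvd_iff_dvd_right, ← h]
    exact dvd_mul_right _ _
  obtain ⟨i, -, hi⟩ := (dvd_prime_pow hpr _).1 hd
  have hl : Associated (σ (ztR p - 1)) (ztR p - 1) := by
    have e : ztR p = psiR p 1 := by simpa using (psiR_natCast p 1).symm
    have h3 : psiR p (-1) * psiR p 1 = 1 := by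
      rw [← AddChar.map_add_eq_mul]; simp
    have h5 : psiR p 1 * psiR p (-1) = 1 := by rw [mul_comm, h3]
    refine ⟨-⟨psiR p 1, psiR p (-1), h5, h3⟩, ?_⟩
    rw [map_sub, map_one, e, hσ]
    simp only [Units.val_neg]
    linear_combination -h3
  have hi2 : Associated (σ W) ((ztR p - 1) ^ i) := by
    have := hi.map σ
    rw [map_pow] at this
    exact this.trans hl.pow_pow
  exact hi.trans hi2.symm

lemma conj_norm_eq {R : Type*} [CommRing R] (p : ℕ) [Fact p.Prime] (N : ZMod p → ℤ) (ψ : AddChar (ZMod p) R)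
    (φ : R →+* ℂ) : ‖φ (∑ c, (N c : R) * ψ c)‖ = ‖φ (∑ c, (N c : R) * ψ (-c))‖ := by
  let ψ' : AddChar (ZMod p) ℂ := φ.toMonoidHom.compAddChar ψ
  have h : ∀ c, φ (ψ c) = ψ' c := fun c => rfl
  rw [← Complex.norm_conj]
  congr 1
  simp only [map_sum, map_mul, map_intCast, h, AddChar.map_neg_eq_conj]

open NumberField in
lemma key_lemma (p M : ℕ) [Fact p.Prime] (hp : Odd p) (N : ZMod p → ℤ)
    (hsum : ∑ c, N c = (p : ℤ) ^ (2 * M + 1))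
    (hW : (∑ c, (N c : 𝓞 (CyclotomicField p ℚ)) * psiR p c) *
      (∑ c, (N c : 𝓞 (CyclotomicField p ℚ)) * psiR p (-c)) = (p : 𝓞 (CyclotomicField p ℚ)) ^ (2 * M + 1)) :
    N 0 = (p : ℤ) ^ (2 * M) ∨ N 0 = (p : ℤ) ^ (2 * M) + (p : ℤ) ^ M ∨
      N 0 = (p : ℤ) ^ (2 * M) - (p : ℤ) ^ M := by
  have hpp : p.Prime := Fact.out
  have hp2 : p ≠ 2 := by rintro rfl; exact absurd hp (by decide)
  set ψ := psiR p with hψ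
  set W : 𝓞 (CyclotomicField p ℚ) := ∑ c, (N c : 𝓞 (CyclotomicField p ℚ)) * ψ c with hWd
  set W' : 𝓞 (CyclotomicField p ℚ) := ∑ c, (N c : 𝓞 (CyclotomicField p ℚ)) * ψ (-c) with hWd'
  have hpR : (p : 𝓞 (CyclotomicField p ℚ)) ≠ 0 := by exact_mod_cast hpp.ne_zero
  have hWW : W * W' ≠ 0 := by rw [hW]; exact pow_ne_zero _ hpR
  have hW0 : W ≠ 0 := left_ne_zero_of_mul hWW
  have hW0' : W' ≠ 0 := right_ne_zero_of_mul hWW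
  obtain ⟨σ, hσ⟩ := exists_conj p
  have hσW : σ W = W' := by
    simp only [hWd, hWd', map_sum, map_mul, map_intCast, hψ, hσ]
  obtain ⟨u, hu⟩ : Associated W' W := by
    have := assoc_conj p (2 * M + 1) σ hσ W (by rw [hσW]; exact hW)
    rw [hσW] at this
    exact this.symm
  -- `u` has finite order
  obtain ⟨n, hn, hun⟩ : ∃ n, ∃ _ : 0 < n, ((u : 𝓞 (CyclotomicField p ℚ)) : CyclotomicField p ℚ) ^ n = 1 := by
    refine NumberField.Embeddings.pow_eq_one_of_norm_eq_one (CyclotomicField p ℚ) ℂ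
      (RingOfIntegers.isIntegral_coe _) fun φ => ?_
    have h1 := conj_norm_eq p N ψ (φ.comp (algebraMap (𝓞 (CyclotomicField p ℚ)) (CyclotomicField p ℚ)))
    rw [← hWd, ← hWd', ← hu, map_mul, norm_mul] at h1
    have h2 : ‖(φ.comp (algebraMap (𝓞 (CyclotomicField p ℚ)) (CyclotomicField p ℚ))) W'‖ ≠ 0 := by
      rw [norm_ne_zero_iff]
      intro h
      rw [RingHom.comp_apply, map_eq_zero] at h
      exact hW0' ((FaithfulSMul.algebraMap_eq_zero_iff (𝓞 (CyclotomicField p ℚ)) (CyclotomicField p ℚ)).1 h)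
    exact mul_left_cancel₀ h2 (h1.trans (mul_one _).symm)
  -- Gauss sum
  set χ : MulChar (ZMod p) (𝓞 (CyclotomicField p ℚ)) := (quadraticChar (ZMod p)).ringHomComp (Int.castRingHom (𝓞 (CyclotomicField p ℚ))) with hχ
  have hχ1 : χ ≠ 1 := by
    rw [hχ, MulChar.ringHomComp_ne_one_iff (RingHom.injective_int _)]
    exact quadraticChar_ne_one (by rw [ZMod.ringChar_zmod_n]; exact hp2)
  have hχ2 : χ.IsQuadratic := (quadraticChar_isQuadratic (ZMod p)).comp _
  have hG := gaussSum_sq hχ1 hχ2 (psiR_prim p)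
  rw [ZMod.card, ← hψ] at hG
  set G := gaussSum χ ψ with hGd
  obtain ⟨s, hs, hs2⟩ : ∃ s : ℤ, χ (-1) = (s : 𝓞 (CyclotomicField p ℚ)) ∧ (s = 1 ∨ s = -1) := by
    refine ⟨quadraticChar (ZMod p) (-1), rfl, ?_⟩
    exact quadraticChar_dichotomy (neg_ne_zero.2 one_ne_zero)
  rw [hs] at hG
  have hss : (s : 𝓞 (CyclotomicField p ℚ)) * s = 1 := by rcases hs2 with h | h <;> simp [h]
  -- epsilon
  set ε : CyclotomicField p ℚ := (W : CyclotomicField p ℚ) * (G : CyclotomicField p ℚ) / (p : CyclotomicField p ℚ) ^ (M + 1) with hε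
  have hpK : (p : CyclotomicField p ℚ) ≠ 0 := by exact_mod_cast hpp.ne_zero
  have hWGsq : (W * G) ^ 2 = s * u * ((p : 𝓞 (CyclotomicField p ℚ)) ^ (M + 1)) ^ 2 := by
    have : W * W = u * (p : 𝓞 (CyclotomicField p ℚ)) ^ (2 * M + 1) := by rw [← hW, ← hu]; ring
    calc (W * G) ^ 2 = (W * W) * G ^ 2 := by ring
      _ = _ := by rw [this, hG]; ring
  have hε2 : ε ^ 2 = (s : CyclotomicField p ℚ) * ((u : 𝓞 (CyclotomicField p ℚ)) : CyclotomicField p ℚ) := by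
    have h := congrArg (algebraMap (𝓞 (CyclotomicField p ℚ)) (CyclotomicField p ℚ)) hWGsq
    simp only [map_mul, map_pow, map_intCast, map_natCast] at h
    rw [hε, div_pow, div_eq_iff (by positivity)]
    simpa using h
  have hεfin : IsOfFinOrder ε := by
    rw [isOfFinOrder_iff_pow_eq_one]
    refine ⟨2 * (2 * n), by positivity, ?_⟩
    rw [pow_mul, hε2, mul_pow, mul_comm 2 n, pow_mul _ n 2, pow_mul _ n 2, hun]
    rcases hs2 with h | h <;> simp [h, ← pow_mul, mul_comm n 2]
  obtain ⟨r, -, hr⟩ := (IsCyclotomicExtension.zeta_spec p ℚ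
    (CyclotomicField p ℚ)).exists_pow_or_neg_mul_pow_of_isOfFinOrder hp hεfin
  obtain ⟨t, ht, hrt⟩ : ∃ t : ℤ, (t = 1 ∨ t = -1) ∧ W * G = t * ψ (r : ZMod p) * (p : 𝓞 (CyclotomicField p ℚ)) ^ (M + 1) := by
    have hψr : ((ψ (r : ZMod p) : 𝓞 (CyclotomicField p ℚ)) : CyclotomicField p ℚ) = IsCyclotomicExtension.zeta p ℚ (CyclotomicField p ℚ) ^ r := by
      rw [hψ, psiR_natCast]; rfl
    rcases hr with hr | hr
    · refine ⟨1, Or.inl rfl, ?_⟩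
      apply RingOfIntegers.ext
      rw [hε, div_eq_iff (by positivity)] at hr
      simp only [map_mul, map_pow, map_intCast, map_natCast, hψr]
      simpa using hr
    · refine ⟨-1, Or.inr rfl, ?_⟩
      apply RingOfIntegers.ext
      rw [hε, div_eq_iff (by positivity)] at hr
      simp only [map_mul, map_pow, map_intCast, map_natCast, hψr]
      simpa using hr
  have hWfin : W = (s * t : ℤ) * (p : 𝓞 (CyclotomicField p ℚ)) ^ M * (ψ (r : ZMod p) * G) := by
    apply mul_right_cancel₀ hpR
    calc W * p = s * (W * (s * p)) := by linear_combination (-(W * p)) * hss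
      _ = s * (W * G) * G := by rw [← hG]; ring
      _ = _ := by rw [hrt]; push_cast; ring
  have hψG : ψ (r : ZMod p) * G = ∑ c, ((quadraticChar (ZMod p) (c - r) : ℤ) : 𝓞 (CyclotomicField p ℚ)) * ψ c := by
    rw [hGd, gaussSum, Finset.mul_sum]
    refine Fintype.sum_equiv (Equiv.addRight (r : ZMod p)) _ _ fun c => ?_
    simp only [Equiv.coe_addRight, add_sub_cancel_right, AddChar.map_add_eq_mul]
    change _ * (((quadraticChar (ZMod p) c : ℤ) : 𝓞 (CyclotomicField p ℚ)) * _) = _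
    ring
  have hrel := psiR_rel p (fun c => N c - s * t * (p : ℤ) ^ M * quadraticChar (ZMod p) (c - r)) (by
    have : ∀ c, ((N c - s * t * (p : ℤ) ^ M * quadraticChar (ZMod p) (c - r) : ℤ) : 𝓞 (CyclotomicField p ℚ)) * psiR p c
      = (N c : 𝓞 (CyclotomicField p ℚ)) * ψ c - (s * t : ℤ) * (p : 𝓞 (CyclotomicField p ℚ)) ^ M * (((quadraticChar (ZMod p) (c - r) : ℤ) : 𝓞 (CyclotomicField p ℚ)) * ψ c) := by
      intro c; push_cast; ring
    simp only [this]
    rw [Finset.sum_sub_distrib, ← Finset.mul_sum, ← hψG, ← hWfin, sub_self])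
  have hχs : ∑ c : ZMod p, quadraticChar (ZMod p) (c - r) = 0 := by
    rw [← quadraticChar_sum_zero (F := ZMod p) (by rw [ZMod.ringChar_zmod_n]; exact hp2)]
    exact Fintype.sum_equiv (Equiv.subRight (r : ZMod p)) _ _ fun c => rfl
  have hS : ∑ c, (N c - s * t * (p : ℤ) ^ M * quadraticChar (ZMod p) (c - r)) = (p : ℤ) ^ (2 * M + 1) := by
    rw [Finset.sum_sub_distrib, ← Finset.mul_sum, hχs, hsum]; ring
  rw [Finset.sum_congr rfl (fun c _ => hrel c), Finset.sum_const, Finset.card_univ, ZMod.card,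
    nsmul_eq_mul, pow_succ', ] at hS
  have hN0 := mul_left_cancel₀ (by exact_mod_cast hpp.ne_zero : (p : ℤ) ≠ 0) hS
  have h3 : quadraticChar (ZMod p) (0 - r) = 0 ∨ quadraticChar (ZMod p) (0 - r) = 1 ∨
      quadraticChar (ZMod p) (0 - r) = -1 := quadraticChar_isQuadratic (ZMod p) _
  rcases hs2 with rfl | rfl <;> rcases ht with rfl | rfl <;> rcases h3 with h | h | h <;>
    rw [h] at hN0 <;> first
    | (left; linarith)
    | (right; left; linarith)
    | (right; right; linarith)

section trace
variable (p : ℕ) [Fact p.Prime] (F : Type*) [Field F] [Fintype F] [DecidableEq F] [Algebra (ZMod p) F]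

lemma orth1 (A : F) : ∑ z : F, psiR p (Algebra.trace (ZMod p) F (z * A)) =
    if A = 0 then (Fintype.card F : NumberField.RingOfIntegers (CyclotomicField p ℚ)) else 0 := by
  have hpp : p.Prime := Fact.out
  split_ifs with h
  · simp [h]
  · let Φ : AddChar F (NumberField.RingOfIntegers (CyclotomicField p ℚ)) :=
      { toFun := fun z => psiR p (Algebra.trace (ZMod p) F (z * A))
        map_zero_eq_one' := by simp
        map_add_eq_mul' := by intro x y; rw [add_mul, map_add, AddChar.map_add_eq_mul] }
    refine AddChar.sum_eq_zero_of_ne_one (ψ := Φ) fun h1 => ?_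
    have : Module.Finite (ZMod p) F := Module.Finite.of_finite
    obtain ⟨z0, hz0⟩ := Algebra.trace_surjective (ZMod p) F 1
    have h2 : Φ (z0 / A) = 1 := by rw [h1]; rfl
    change psiR p (Algebra.trace (ZMod p) F (z0 / A * A)) = 1 at h2
    rw [div_mul_cancel₀ _ h, hz0] at h2
    have e := psiR_natCast p 1
    rw [Nat.cast_one, h2, pow_one] at e
    exact (ztR_prim p).ne_one hpp.one_lt e.symm

lemma orth2 (A B : F) : ∑ ab : F × F, psiR p (Algebra.trace (ZMod p) F (ab.1 * A + ab.2 * B)) =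
    if A = 0 ∧ B = 0 then (Fintype.card F : NumberField.RingOfIntegers (CyclotomicField p ℚ)) ^ 2 else 0 := by
  rw [Fintype.sum_prod_type]
  simp only [map_add, AddChar.map_add_eq_mul]
  simp only [← Finset.mul_sum, ← Finset.sum_mul, orth1]
  by_cases hA : A = 0 <;> by_cases hB : B = 0 <;> simp [hA, hB, sq]

/-- number of zeros of a component function -/
noncomputable def NZ (Pl : F → F) (ab : F × F) : ℕ :=
  (Finset.univ.filter fun x : F => Algebra.trace (ZMod p) F (ab.1 * Pl x + ab.2 * x) = 0).card

lemma bent_lemma (Pl : F → F)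
    (hPN : ∀ a : F, a ≠ 0 → Function.Bijective (fun x : F => Pl (x + a) - Pl x)) (a b : F) (ha : a ≠ 0) :
    (∑ x : F, psiR p (Algebra.trace (ZMod p) F (a * Pl x + b * x))) *
    (∑ x : F, psiR p (-Algebra.trace (ZMod p) F (a * Pl x + b * x))) = Fintype.card F := by
  rw [Finset.sum_mul_sum, Finset.sum_comm]
  have h1 : ∀ y : F, ∑ x : F, psiR p (Algebra.trace (ZMod p) F (a * Pl x + b * x)) *
      psiR p (-Algebra.trace (ZMod p) F (a * Pl y + b * y)) =
      ∑ d : F, psiR p (Algebra.trace (ZMod p) F ((Pl (y + d) - Pl y) * a)) *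
        psiR p (Algebra.trace (ZMod p) F (b * d)) := by
    intro y
    symm
    refine Fintype.sum_equiv (Equiv.addLeft y) _ _ fun d => ?_
    rw [← AddChar.map_add_eq_mul, ← AddChar.map_add_eq_mul, ← map_add, ← map_neg, ← map_add]
    simp only [Equiv.coe_addLeft]
    congr 2
    ring
  simp only [h1]
  rw [Finset.sum_comm]
  have h2 : ∀ d : F, ∑ y : F, psiR p (Algebra.trace (ZMod p) F ((Pl (y + d) - Pl y) * a)) *
        psiR p (Algebra.trace (ZMod p) F (b * d)) =
        if d = 0 then (Fintype.card F : NumberField.RingOfIntegers (CyclotomicField p ℚ)) else 0 := by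
    intro d
    split_ifs with hd
    · simp [hd]
    · rw [← Finset.sum_mul, (hPN d hd).sum_comp (fun z => psiR p (Algebra.trace (ZMod p) F (z * a))),
        orth1, if_neg ha, zero_mul]
  simp [h2]

lemma sum_psi_mul (c : ZMod p) : ∑ t : ZMod p, psiR p (t * c) =
    if c = 0 then (p : NumberField.RingOfIntegers (CyclotomicField p ℚ)) else 0 := by
  have := AddChar.sum_mulShift c (psiR_prim p)
  rw [ZMod.card] at this
  rw [this]; split_ifs <;> simp

lemma NZ_formula (Pl : F → F) (ab : F × F) :
    (p : NumberField.RingOfIntegers (CyclotomicField p ℚ)) * (NZ p F Pl ab) = Fintype.card F +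
    ∑ t ∈ Finset.univ.erase (0 : ZMod p), ∑ x : F,
      psiR p (t * Algebra.trace (ZMod p) F (ab.1 * Pl x + ab.2 * x)) := by
  have h : (Fintype.card F : NumberField.RingOfIntegers (CyclotomicField p ℚ)) = ∑ x : F,
      psiR p (0 * Algebra.trace (ZMod p) F (ab.1 * Pl x + ab.2 * x)) := by simp
  rw [h, Finset.add_sum_erase _ (fun t => ∑ x : F,
      psiR p (t * Algebra.trace (ZMod p) F (ab.1 * Pl x + ab.2 * x))) (Finset.mem_univ 0), Finset.sum_comm]
  simp only [sum_psi_mul, NZ]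
  rw [← Finset.sum_filter, Finset.sum_const, nsmul_eq_mul, mul_comm]

lemma NZ_cases (M : ℕ) (hp : Odd p) (hF : Fintype.card F = p ^ (2 * M + 1)) (Pl : F → F)
    (hPN : ∀ a : F, a ≠ 0 → Function.Bijective (fun x : F => Pl (x + a) - Pl x)) (ab : F × F) (hab : ab ≠ 0) :
    (NZ p F Pl ab : ℤ) = (p : ℤ) ^ (2 * M) ∨ (NZ p F Pl ab : ℤ) = (p : ℤ) ^ (2 * M) + (p : ℤ) ^ M ∨
      (NZ p F Pl ab : ℤ) = (p : ℤ) ^ (2 * M) - (p : ℤ) ^ M := by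
  have hpp : p.Prime := Fact.out
  obtain ⟨a, b⟩ := ab
  by_cases ha : a = 0
  · left
    subst ha
    have hb : b ≠ 0 := by rintro rfl; exact hab rfl
    have h := NZ_formula p F Pl (0, b)
    rw [Finset.sum_eq_zero, add_zero, hF] at h
    · have h' : p * NZ p F Pl (0, b) = p * p ^ (2 * M) := by
        rw [← pow_succ']; exact_mod_cast h
      exact_mod_cast Nat.eq_of_mul_eq_mul_left hpp.pos h'
    · intro t ht
      have ht0 := Finset.ne_of_mem_erase ht
      have : ∀ x : F, t * Algebra.trace (ZMod p) F (0 * Pl x + b * x) =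
          Algebra.trace (ZMod p) F (x * (algebraMap (ZMod p) F t * b)) := by
        intro x
        rw [← smul_eq_mul, ← map_smul, Algebra.smul_def]
        congr 1; ring
      simp only [this]
      rw [orth1, if_neg]
      exact mul_ne_zero (by simpa using ht0) hb
  · let f : F → ZMod p := fun x => Algebra.trace (ZMod p) F (a * Pl x + b * x)
    let N : ZMod p → ℤ := fun c => ((Finset.univ.filter fun x : F => f x = c).card : ℤ)
    have hN : ∀ g : ZMod p → NumberField.RingOfIntegers (CyclotomicField p ℚ),
        ∑ c, (N c : NumberField.RingOfIntegers (CyclotomicField p ℚ)) * g c = ∑ x : F, g (f x) := by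
      intro g
      rw [← Finset.sum_fiberwise (s := Finset.univ) (g := f)]
      refine Finset.sum_congr rfl fun c _ => ?_
      rw [Finset.sum_congr rfl (g := fun _ => g c)]
      · simp [N]
      · intro x hx; rw [(Finset.mem_filter.1 hx).2]
    refine key_lemma p M hp N ?_ ?_
    · have := Finset.card_eq_sum_card_fiberwise (s := (Finset.univ : Finset F)) (t := Finset.univ) (f := f) (by simp)
      rw [Finset.card_univ, hF] at this
      simp only [N]
      exact_mod_cast this.symm
    · rw [hN (psiR p), hN (fun c => psiR p (-c)), bent_lemma p F Pl hPN a b ha, hF]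
      push_cast; rfl

lemma first_moment (Pl : F → F) (h0 : Pl 0 = 0) :
    ∑ ab : F × F, ((p : ℤ) * NZ p F Pl ab - Fintype.card F) = ((p : ℤ) - 1) * (Fintype.card F) ^ 2 := by
  have hpp : p.Prime := Fact.out
  have h : ((∑ ab : F × F, ((p : ℤ) * NZ p F Pl ab - Fintype.card F) : ℤ) :
      NumberField.RingOfIntegers (CyclotomicField p ℚ)) = (((p : ℤ) - 1) * (Fintype.card F) ^ 2 : ℤ) := by
    push_cast
    simp only [NZ_formula, add_sub_cancel_left]
    rw [Finset.sum_comm]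
    have : ∀ t ∈ Finset.univ.erase (0 : ZMod p), ∑ ab : F × F, ∑ x : F,
      psiR p (t * Algebra.trace (ZMod p) F (ab.1 * Pl x + ab.2 * x)) =
        (Fintype.card F : NumberField.RingOfIntegers (CyclotomicField p ℚ)) ^ 2 := by
      intro t ht
      have ht0 := Finset.ne_of_mem_erase ht
      have ht0' : algebraMap (ZMod p) F t ≠ 0 := by simpa using ht0
      rw [Finset.sum_comm]
      have e : ∀ (x : F) (ab : F × F), t * Algebra.trace (ZMod p) F (ab.1 * Pl x + ab.2 * x) =
          Algebra.trace (ZMod p) F (ab.1 * (algebraMap (ZMod p) F t * Pl x) + ab.2 * (algebraMap (ZMod p) F t * x)) := by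
        intro x ab
        rw [← smul_eq_mul, ← map_smul, Algebra.smul_def]
        congr 1; ring
      simp only [e, orth2]
      rw [Finset.sum_eq_single 0]
      · simp [h0]
      · intro x _ hx
        rw [if_neg]
        rintro ⟨-, h⟩
        exact mul_ne_zero ht0' hx h
      · simp
    rw [Finset.sum_congr rfl this, Finset.sum_const, Finset.card_erase_of_mem (Finset.mem_univ _),
      Finset.card_univ, ZMod.card, nsmul_eq_mul, Nat.cast_sub hpp.one_le, Nat.cast_one]
  exact_mod_cast h

lemma second_moment (Pl : F → F) (h0 : Pl 0 = 0)
    (hhom : ∀ x : F, x ≠ 0 → ∀ c : ZMod p, c ≠ 0 → c ≠ 1 →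
      Pl (algebraMap (ZMod p) F c * x) ≠ algebraMap (ZMod p) F c * Pl x) :
    ∑ ab : F × F, ((p : ℤ) * NZ p F Pl ab - Fintype.card F) ^ 2 =
      ((p : ℤ) - 1) * (Fintype.card F) ^ 2 * (p + Fintype.card F - 2) := by
  have hpp : p.Prime := Fact.out
  have h : ((∑ ab : F × F, ((p : ℤ) * NZ p F Pl ab - Fintype.card F) ^ 2 : ℤ) :
      NumberField.RingOfIntegers (CyclotomicField p ℚ)) =
        (((p : ℤ) - 1) * (Fintype.card F) ^ 2 * (p + Fintype.card F - 2) : ℤ) := by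
    push_cast
    simp only [NZ_formula, add_sub_cancel_left]
    simp only [sq (∑ t ∈ Finset.univ.erase (0 : ZMod p), _), Finset.sum_mul_sum]
    rw [Finset.sum_comm]
    have key : ∀ s ∈ Finset.univ.erase (0 : ZMod p), ∀ t ∈ Finset.univ.erase (0 : ZMod p),
      ∑ ab : F × F, ∑ x : F, ∑ y : F, psiR p (s * Algebra.trace (ZMod p) F (ab.1 * Pl x + ab.2 * x)) *
        psiR p (t * Algebra.trace (ZMod p) F (ab.1 * Pl y + ab.2 * y)) =
        (Fintype.card F : NumberField.RingOfIntegers (CyclotomicField p ℚ)) ^ 2 +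
        if t = -s then (Fintype.card F : NumberField.RingOfIntegers (CyclotomicField p ℚ)) ^ 2 *
          (Fintype.card F - 1) else 0 := by
      intro s hs t ht
      have hs0 := Finset.ne_of_mem_erase hs
      have ht0 := Finset.ne_of_mem_erase ht
      have ht0' : algebraMap (ZMod p) F t ≠ 0 := by simpa using ht0
      have hs0' : algebraMap (ZMod p) F s ≠ 0 := by simpa using hs0
      have e : ∀ (x y : F) (ab : F × F), psiR p (s * Algebra.trace (ZMod p) F (ab.1 * Pl x + ab.2 * x)) *
          psiR p (t * Algebra.trace (ZMod p) F (ab.1 * Pl y + ab.2 * y)) =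
          psiR p (Algebra.trace (ZMod p) F
            (ab.1 * (algebraMap (ZMod p) F s * Pl x + algebraMap (ZMod p) F t * Pl y)
            + ab.2 * (algebraMap (ZMod p) F s * x + algebraMap (ZMod p) F t * y))) := by
        intro x y ab
        rw [← AddChar.map_add_eq_mul, ← smul_eq_mul s, ← map_smul, ← smul_eq_mul t, ← map_smul, ← map_add,
          Algebra.smul_def, Algebra.smul_def]
        congr 2; ring
      rw [Finset.sum_comm]
      have e2 : ∀ x : F, ∑ ab : F × F, ∑ y : F, psiR p (s * Algebra.trace (ZMod p) F (ab.1 * Pl x + ab.2 * x)) *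
        psiR p (t * Algebra.trace (ZMod p) F (ab.1 * Pl y + ab.2 * y)) =
        ∑ y : F, if algebraMap (ZMod p) F s * Pl x + algebraMap (ZMod p) F t * Pl y = 0 ∧
          algebraMap (ZMod p) F s * x + algebraMap (ZMod p) F t * y = 0 then
          (Fintype.card F : NumberField.RingOfIntegers (CyclotomicField p ℚ)) ^ 2 else 0 := by
        intro x
        rw [Finset.sum_comm]
        refine Finset.sum_congr rfl fun y _ => ?_
        rw [← orth2]
        exact Finset.sum_congr rfl fun ab _ => e x y ab
      rw [Finset.sum_congr rfl fun x _ => e2 x]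
      by_cases hst : t = -s
      · have e3 : ∀ x y : F, (algebraMap (ZMod p) F s * Pl x + algebraMap (ZMod p) F t * Pl y = 0 ∧
          algebraMap (ZMod p) F s * x + algebraMap (ZMod p) F t * y = 0) ↔ x = y := by
          intro x y
          rw [hst, map_neg]
          constructor
          · rintro ⟨-, h⟩
            apply mul_left_cancel₀ hs0'
            linear_combination h
          · rintro rfl; constructor <;> ring
        simp only [e3, if_pos hst]
        simp
        ring
      · have e3 : ∀ x y : F, (algebraMap (ZMod p) F s * Pl x + algebraMap (ZMod p) F t * Pl y = 0 ∧
          algebraMap (ZMod p) F s * x + algebraMap (ZMod p) F t * y = 0) ↔ (x = 0 ∧ y = 0) := by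
          intro x y
          constructor
          · rintro ⟨h1, h2⟩
            have hx : x = 0 := by
              by_contra hx
              have hc := hhom x hx (-s / t) (div_ne_zero (neg_ne_zero.2 hs0) ht0) (by
                intro h; rw [div_eq_one_iff_eq ht0] at h; exact hst h.symm)
              have hy : y = algebraMap (ZMod p) F (-s / t) * x := by
                rw [map_div₀, map_neg]; field_simp; linear_combination h2
              apply hc
              rw [← hy, map_div₀, map_neg]
              field_simp
              linear_combination h1
            subst hx
            refine ⟨rfl, ?_⟩
            rw [mul_zero, zero_add] at h2
            exact (mul_eq_zero.1 h2).resolve_left ht0'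
          · rintro ⟨rfl, rfl⟩; simp [h0]
        simp only [e3, if_neg hst, ite_and]
        simp
    have key2 : ∀ s ∈ Finset.univ.erase (0 : ZMod p),
      ∑ ab : F × F, ∑ t ∈ Finset.univ.erase (0 : ZMod p), ∑ x : F, ∑ y : F,
        psiR p (s * Algebra.trace (ZMod p) F (ab.1 * Pl x + ab.2 * x)) *
        psiR p (t * Algebra.trace (ZMod p) F (ab.1 * Pl y + ab.2 * y)) =
        (p - 1) * (Fintype.card F : NumberField.RingOfIntegers (CyclotomicField p ℚ)) ^ 2 +
        (Fintype.card F : NumberField.RingOfIntegers (CyclotomicField p ℚ)) ^ 2 *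
          (Fintype.card F - 1) := by
      intro s hs
      rw [Finset.sum_comm, Finset.sum_congr rfl (key s hs), Finset.sum_add_distrib, Finset.sum_ite_eq',
        if_pos (by simpa using Finset.ne_of_mem_erase hs), Finset.sum_const,
        Finset.card_erase_of_mem (Finset.mem_univ _),
        Finset.card_univ, ZMod.card, nsmul_eq_mul, Nat.cast_sub hpp.one_le, Nat.cast_one]
    rw [Finset.sum_congr rfl key2, Finset.sum_const, Finset.card_erase_of_mem (Finset.mem_univ _),
      Finset.card_univ, ZMod.card, nsmul_eq_mul, Nat.cast_sub hpp.one_le, Nat.cast_one]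
    ring
  exact_mod_cast h
end trace

/-- the codeword of a pair -/
noncomputable def cword (p : ℕ) [Fact p.Prime] (F : Type*) [Field F] [Fintype F]
    [Algebra (ZMod p) F] (Pl : F → F) (ab : F × F) : {x : F // x ≠ 0} → ZMod p :=
  fun x => Algebra.trace (ZMod p) F (ab.1 * Pl x.1 + ab.2 * x.1)

lemma wt_add_NZ (p : ℕ) [Fact p.Prime] (F : Type*) [Field F] [Fintype F] [DecidableEq F]
    [Algebra (ZMod p) F] (Pl : F → F) (h0 : Pl 0 = 0) (ab : F × F) :
    wtC p F (cword p F Pl ab) + NZ p F Pl ab = Fintype.card F := by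
  have h : wtC p F (cword p F Pl ab) = (Finset.univ.filter fun x : F =>
      ¬ Algebra.trace (ZMod p) F (ab.1 * Pl x + ab.2 * x) = 0).card := by
    rw [wtC, ← Finset.card_map (Function.Embedding.subtype _)]
    congr 1
    ext x
    simp only [Finset.mem_map, Finset.mem_filter, Finset.mem_univ, true_and, cword,
      Function.Embedding.subtype_apply, Subtype.exists, exists_and_right, exists_eq_right]
    constructor
    · rintro ⟨_, h⟩; exact (Finset.mem_filter.1 h).2
    · intro h
      refine ⟨?_, Finset.mem_filter.2 ⟨Finset.mem_univ _, h⟩⟩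
      rintro rfl
      exact h (by simp [h0])
  rw [h, NZ, add_comm, Finset.card_filter_add_card_filter_not, Finset.card_univ]

lemma ACount_eq (p : ℕ) [Fact p.Prime] (F : Type*) [Field F] [Fintype F] [DecidableEq F]
    [Algebra (ZMod p) F] (Pl : F → F) (hinj : Function.Injective (cword p F Pl)) (i : ℕ) :
    ACount p F Pl i = (Finset.univ.filter fun ab : F × F => wtC p F (cword p F Pl ab) = i).card := by
  classical
  rw [ACount, ← Finset.card_image_of_injective _ hinj, ← Set.ncard_coe_finset, Nat.card_coe_set_eq]
  congr 1
  ext g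
  simp only [Set.mem_ofPred_eq, CCode, Finset.coe_image, Finset.coe_filter, Finset.mem_univ, true_and,
    Set.mem_image, Prod.exists]
  constructor
  · rintro ⟨⟨a, b, rfl⟩, h⟩
    exact ⟨a, b, h, rfl⟩
  · rintro ⟨a, b, h, rfl⟩
    exact ⟨⟨a, b, rfl⟩, h⟩

lemma counts (p M : ℕ) [Fact p.Prime] (hp : Odd p)
    (F : Type*) [Field F] [Fintype F] [DecidableEq F] [Algebra (ZMod p) F]
    (hF : Fintype.card F = p ^ (2 * M + 1))
    (Pl : F → F)
    (hPN : ∀ a : F, a ≠ 0 → Function.Bijective (fun x : F => Pl (x + a) - Pl x))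
    (h0 : Pl 0 = 0)
    (hhom : ∀ x : F, x ≠ 0 → ∀ c : ZMod p, c ≠ 0 → c ≠ 1 →
      Pl (algebraMap (ZMod p) F c * x) ≠ algebraMap (ZMod p) F c * Pl x) :
    2 * ((Finset.univ.filter fun ab : F × F => (NZ p F Pl ab : ℤ) = (p : ℤ) ^ (2 * M) + (p : ℤ) ^ M).card : ℤ)
      = (p - 1) * (p ^ (2 * M + 1) - 1) * (p ^ (2 * M) + p ^ M) ∧
    2 * ((Finset.univ.filter fun ab : F × F => (NZ p F Pl ab : ℤ) = (p : ℤ) ^ (2 * M) - (p : ℤ) ^ M).card : ℤ)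
      = (p - 1) * (p ^ (2 * M + 1) - 1) * (p ^ (2 * M) - p ^ M) ∧
    ((Finset.univ.filter fun ab : F × F => (NZ p F Pl ab : ℤ) = (p : ℤ) ^ (2 * M)).card : ℤ)
      = (p ^ (2 * M) + 1) * (p ^ (2 * M + 1) - 1) := by
  have hpp : p.Prime := Fact.out
  have hp3 : (3 : ℤ) ≤ p := by
    have h2 := hpp.two_le
    have : p ≠ 2 := by rintro rfl; exact absurd hp (by decide)
    exact_mod_cast (by omega : 3 ≤ p)
  have hc := NZ_cases p F M hp hF Pl hPN
  have m1 := first_moment p F Pl h0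
  have m2 := second_moment p F Pl h0 hhom
  have hN0 : (NZ p F Pl 0 : ℤ) = (p : ℤ) ^ (2 * M + 1) := by
    have : NZ p F Pl 0 = Fintype.card F := by simp [NZ]
    rw [this, hF]; push_cast; rfl
  have hcard : Fintype.card (F × F) = (p ^ (2 * M + 1)) ^ 2 := by rw [Fintype.card_prod, hF, sq]
  simp only [hF] at m1 m2
  push_cast at m1 m2
  have e1 : (p : ℤ) ^ (2 * M) = ((p : ℤ) ^ M) ^ 2 := by rw [← pow_mul, mul_comm]
  have e2 : (p : ℤ) ^ (2 * M + 1) = p * ((p : ℤ) ^ M) ^ 2 := by rw [pow_succ', e1]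
  have e3 : ((Fintype.card (F × F) : ℕ) : ℤ) = (p * ((p : ℤ) ^ M) ^ 2) ^ 2 := by
    rw [hcard]; push_cast; rw [e2]
  have hP1 : (1 : ℤ) ≤ (p : ℤ) ^ M := by exact_mod_cast Nat.one_le_pow _ _ hpp.pos
  rw [e2] at m1 m2 hN0
  rw [e1, e2]
  simp only [e1] at hc
  generalize (p : ℤ) ^ M = P at *
  generalize (p : ℤ) = r at *
  have i1 : r * P ^ 2 > P ^ 2 + P := by nlinarith
  have i2 : r * P ^ 2 > P ^ 2 := by linarith
  have i3 : r * P ^ 2 > P ^ 2 - P := by linarith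
  have t1 : ∀ ab : F × F, r * (NZ p F Pl ab : ℤ) - r * P ^ 2 =
      (if ab = 0 then (r - 1) * (r * P ^ 2) else 0) + (if (NZ p F Pl ab : ℤ) = P ^ 2 + P then r * P else 0)
      - (if (NZ p F Pl ab : ℤ) = P ^ 2 - P then r * P else 0) := by
    intro ab
    by_cases hab : ab = 0
    · subst hab
      rw [hN0, if_pos rfl, if_neg i1.ne', if_neg i3.ne']; ring
    · rw [if_neg hab]
      rcases hc ab hab with h | h | h <;> rw [h]
      · rw [if_neg (by linarith), if_neg (by linarith)]; ring
      · rw [if_pos rfl, if_neg (by linarith)]; ring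
      · rw [if_neg (by linarith), if_pos rfl]; ring
  have t2 : ∀ ab : F × F, (r * (NZ p F Pl ab : ℤ) - r * P ^ 2) ^ 2 =
      (if ab = 0 then ((r - 1) * (r * P ^ 2)) ^ 2 else 0) + (if (NZ p F Pl ab : ℤ) = P ^ 2 + P then (r * P) ^ 2 else 0)
      + (if (NZ p F Pl ab : ℤ) = P ^ 2 - P then (r * P) ^ 2 else 0) := by
    intro ab
    by_cases hab : ab = 0
    · subst hab
      rw [hN0, if_pos rfl, if_neg i1.ne', if_neg i3.ne']; ring
    · rw [if_neg hab]
      rcases hc ab hab with h | h | h <;> rw [h]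
      · rw [if_neg (by linarith), if_neg (by linarith)]; ring
      · rw [if_pos rfl, if_neg (by linarith)]; ring
      · rw [if_neg (by linarith), if_pos rfl]; ring
  have t3 : ∀ ab : F × F, (1 : ℤ) = (if ab = 0 then 1 else 0) + (if (NZ p F Pl ab : ℤ) = P ^ 2 + P then 1 else 0)
      + (if (NZ p F Pl ab : ℤ) = P ^ 2 - P then 1 else 0) + (if (NZ p F Pl ab : ℤ) = P ^ 2 then 1 else 0) := by
    intro ab
    by_cases hab : ab = 0
    · subst hab
      rw [hN0, if_pos rfl, if_neg i1.ne', if_neg i3.ne', if_neg i2.ne']; ring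
    · rw [if_neg hab]
      rcases hc ab hab with h | h | h <;> rw [h]
      · rw [if_neg (by linarith), if_neg (by linarith), if_pos rfl]; ring
      · rw [if_pos rfl, if_neg (by linarith), if_neg (by linarith)]; ring
      · rw [if_neg (by linarith), if_pos rfl, if_neg (by linarith)]; ring
  have m3 : ((Fintype.card (F × F) : ℕ) : ℤ) = ∑ ab : F × F, 1 := by simp
  rw [Finset.sum_congr rfl fun ab _ => t1 ab] at m1
  rw [Finset.sum_congr rfl fun ab _ => t2 ab] at m2
  rw [Finset.sum_congr rfl fun ab _ => t3 ab, e3] at m3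
  simp only [Finset.sum_add_distrib, Finset.sum_sub_distrib, Finset.sum_ite_eq', Finset.mem_univ, if_true,
    ← Finset.sum_filter, Finset.sum_const, nsmul_eq_mul, Finset.filter_eq', Finset.card_singleton] at m1 m2 m3
  generalize ((Finset.univ.filter fun ab : F × F => (NZ p F Pl ab : ℤ) = P ^ 2 + P).card : ℤ) = X at *
  generalize ((Finset.univ.filter fun ab : F × F => (NZ p F Pl ab : ℤ) = P ^ 2 - P).card : ℤ) = Y at *
  generalize ((Finset.univ.filter fun ab : F × F => (NZ p F Pl ab : ℤ) = P ^ 2).card : ℤ) = Z at *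
  have hrP : r * P ≠ 0 := by positivity
  have s1 : X - Y = (r - 1) * (r * P ^ 2 - 1) * P := by
    apply mul_left_cancel₀ hrP
    push_cast at m1
    linear_combination m1
  have s2 : X + Y = (r - 1) * (r * P ^ 2 - 1) * P ^ 2 := by
    apply mul_left_cancel₀ (pow_ne_zero 2 hrP)
    push_cast at m2
    linear_combination m2
  push_cast at m3
  refine ⟨by linear_combination s1 + s2, by linear_combination s2 - s1, by linear_combination -m3 - s2⟩

/-- the weight distribution of `C_Π` for `m` odd, `Π` perfect nonlinear with
`Π(0) = 0` and `Π(cx) ≠ cΠ(x)` for all `x ∈ 𝔽_q^*` and `c ∈ 𝔽_p \ {0,1}`. -/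
theorem stmt_14 (p m : ℕ) [Fact p.Prime] (hp : Odd p) (hm : Odd m)
    (F : Type*) [Field F] [Fintype F] [DecidableEq F] [Algebra (ZMod p) F]
    (hF : Fintype.card F = p ^ m)
    (Pl : F → F)
    (hPN : ∀ a : F, a ≠ 0 → Function.Bijective (fun x : F => Pl (x + a) - Pl x))
    (h0 : Pl 0 = 0)
    (hhom : ∀ x : F, x ≠ 0 → ∀ c : ZMod p, c ≠ 0 → c ≠ 1 →
      Pl (algebraMap (ZMod p) F c * x) ≠ algebraMap (ZMod p) F c * Pl x) :
    ACount p F Pl 0 = 1 ∧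
    ACount p F Pl ((p - 1) * p ^ (m - 1) - p ^ ((m - 1) / 2))
      = (p - 1) * (p ^ m - 1) * (p ^ (m - 1) + p ^ ((m - 1) / 2)) / 2 ∧
    ACount p F Pl ((p - 1) * p ^ (m - 1)) = (p ^ (m - 1) + 1) * (p ^ m - 1) ∧
    ACount p F Pl ((p - 1) * p ^ (m - 1) + p ^ ((m - 1) / 2))
      = (p - 1) * (p ^ m - 1) * (p ^ (m - 1) - p ^ ((m - 1) / 2)) / 2 ∧
    (∀ i : ℕ, i ∉ ({0, (p - 1) * p ^ (m - 1) - p ^ ((m - 1) / 2), (p - 1) * p ^ (m - 1),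
        (p - 1) * p ^ (m - 1) + p ^ ((m - 1) / 2)} : Set ℕ) →
      ACount p F Pl i = 0) := by
  obtain ⟨M, rfl⟩ := hm
  have hpp : p.Prime := Fact.out
  have hp3 : 3 ≤ p := by
    have h2 := hpp.two_le
    have : p ≠ 2 := by rintro rfl; exact absurd hp (by decide)
    omega
  obtain ⟨c1, c2, c3⟩ := counts p M hp F hF Pl hPN h0 hhom
  have hc := NZ_cases p F M hp hF Pl hPN
  have hwt := wt_add_NZ p F Pl h0
  have hN0 : NZ p F Pl 0 = p ^ (2 * M + 1) := by
    rw [← hF]; simp [NZ]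
  have e1 : 2 * M + 1 - 1 = 2 * M := by omega
  have e2 : 2 * M / 2 = M := by omega
  rw [e1, e2]
  have hP1 : 1 ≤ p ^ M := Nat.one_le_pow _ _ hpp.pos
  have hPP : p ^ M ≤ p ^ (2 * M) := Nat.pow_le_pow_right hpp.pos (by omega)
  have hq1 : 1 ≤ p ^ (2 * M + 1) := Nat.one_le_pow _ _ hpp.pos
  have hD : (p - 1) * p ^ (2 * M) + p ^ (2 * M) = p ^ (2 * M + 1) := by
    rw [pow_succ', Nat.sub_mul, one_mul]
    exact Nat.sub_add_cancel (Nat.le_mul_of_pos_left _ hpp.pos)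
  have hD2 : 2 * p ^ (2 * M) ≤ (p - 1) * p ^ (2 * M) := Nat.mul_le_mul_right _ (by omega)
  have hinj : Function.Injective (cword p F Pl) := by
    intro u v huv
    by_contra hne
    have hz : cword p F Pl (u - v) = fun _ => 0 := by
      funext x
      have := congrFun huv x
      simp only [cword] at this ⊢
      rw [← sub_eq_zero, ← map_sub] at this
      rw [← this]
      congr 1
      simp only [Prod.fst_sub, Prod.snd_sub]; ring
    have hw : wtC p F (cword p F Pl (u - v)) = 0 := by rw [hz]; simp [wtC]
    have h1 := hwt (u - v)
    have h2 := hc (u - v) (sub_ne_zero.2 hne)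
    rw [hw, hF] at h1
    simp only [← Nat.cast_pow] at h2
    omega
  simp only [ACount_eq p F Pl hinj]
  simp only [hF] at hwt
  have k0 : ∀ ab : F × F, wtC p F (cword p F Pl ab) = 0 ↔ ab = 0 := by
    intro ab
    have h1 := hwt ab
    constructor
    · intro h
      by_contra hab
      have h2 := hc ab hab
      simp only [← Nat.cast_pow] at h2
      omega
    · rintro rfl
      omega
  have kk : ∀ ab : F × F, (wtC p F (cword p F Pl ab) : ℤ) + NZ p F Pl ab = (p : ℤ) ^ (2 * M + 1) := by
    intro ab; exact_mod_cast hwt ab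
  refine ⟨?_, ?_, ?_, ?_, ?_⟩
  · simp only [k0]
    simp [Finset.filter_eq']
  · symm
    apply Nat.div_eq_of_eq_mul_right (by norm_num)
    rw [Finset.filter_congr (q := fun ab : F × F => (NZ p F Pl ab : ℤ) = (p : ℤ) ^ (2 * M) + (p : ℤ) ^ M)]
    · zify [hpp.one_le, hq1]
      exact c1.symm
    · intro ab _
      have h1 := hwt ab
      simp only [← Nat.cast_pow]
      omega
  · rw [Finset.filter_congr (q := fun ab : F × F => (NZ p F Pl ab : ℤ) = (p : ℤ) ^ (2 * M))]
    · zify [hpp.one_le, hq1]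
      exact c3
    · intro ab _
      have h1 := hwt ab
      simp only [← Nat.cast_pow]
      omega
  · symm
    apply Nat.div_eq_of_eq_mul_right (by norm_num)
    rw [Finset.filter_congr (q := fun ab : F × F => (NZ p F Pl ab : ℤ) = (p : ℤ) ^ (2 * M) - (p : ℤ) ^ M)]
    · zify [hpp.one_le, hq1, hPP]
      exact c2.symm
    · intro ab _
      have h1 := hwt ab
      simp only [← Nat.cast_pow]
      omega
  · intro i hi
    simp only [Set.mem_insert_iff, Set.mem_singleton_iff, not_or] at hi
    rw [Finset.card_eq_zero, Finset.filter_eq_empty_iff]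
    rintro ab - rfl
    have hab : ab ≠ 0 := fun h => hi.1 ((k0 ab).2 h)
    have h1 := hwt ab
    have h2 := hc ab hab
    simp only [← Nat.cast_pow] at h2
    omega
end
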